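/- arXiv:1606.09141 — 2 statements merged into one kernel-verified Lean document; each statement's English description precedes it below -/
import Mathlib

section
/- Generalized helicoids: let k ≥ 1, let n₁, …, n_k be positive integers, and let c₁, …, c_k be real constants. On the open subset of ℝ^{2n₁} × ⋯ × ℝ^{2n_k} where each Uⱼ(Xⱼ,Yⱼ) = ‖Xⱼ‖² − ‖Yⱼ‖² ≠ 0, the linear combination F = Σⱼ cⱼ·Fⱼ of the independent CH-functions Fⱼ(Xⱼ,Yⱼ) = (1/2)·arctan(Vⱼ/Uⱼ) (each in its own block of variables) satisfies ΔF = 0, Δ_∞F = 0, and hence the minimal hypersurface equation (1 + ‖∇F‖²)·ΔF − Δ_∞F = 0; thus its (multi-valued) graph is a minimal hypersurface in ℝ^{2(n₁+⋯+n_k)+1}. -/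
/-!
In a single block put `W = U² + V²`. Where `U ≠ 0`, the CH-function has the rational gradient
`∂F/∂xᵢ = (U yᵢ - V xᵢ) / W`, `∂F/∂yᵢ = (U xᵢ + V yᵢ) / W` (up to an additive constant
it is locally half the imaginary part of `log ∑ (xᵢ + √-1 yᵢ)²`, so it is pluriharmonic), and
`∂²F/∂xᵢ² + ∂²F/∂yᵢ² = 0` already holds for each single `i`.

The infinity-Laplacian is `∑ₚ ∂ₚF · D_v(∂ₚF)` with `v = ∇F`. Along `v` the quantity `W` has zero
derivative, and so has `‖X‖² + ‖Y‖²` because `F` is homogeneous of degree zero; the sum over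
one block is a combination of these two derivatives, so it vanishes. Blocks do not interact, since
`∂ₚF` depends only on the block containing `p`.

`hasFDerivAt_Fcomb` computes the gradient, `fderiv_pd_inl` and `fderiv_pd_inr` the second
derivatives in an arbitrary direction.
-/

noncomputable section

variable {ι : Type*} [Fintype ι] [DecidableEq ι]

/-- The `i`-th partial derivative `∂F/∂zᵢ` of `F : ℝ^ι → ℝ` at `x`. -/
def pd (F : EuclideanSpace ℝ ι → ℝ) (x : EuclideanSpace ℝ ι) (i : ι) : ℝ :=
  fderiv ℝ F x (EuclideanSpace.single i 1)

/-- The Laplacian `ΔF = Σᵢ ∂²F/∂zᵢ²` at `x`. -/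
def lap (F : EuclideanSpace ℝ ι → ℝ) (x : EuclideanSpace ℝ ι) : ℝ :=
  ∑ i, fderiv ℝ (fun y => pd F y i) x (EuclideanSpace.single i 1)

/-- The infinity-Laplacian `Δ_∞F = Σ_{i,j} (∂F/∂zᵢ)(∂F/∂zⱼ)(∂²F/∂zᵢ∂zⱼ)` at `x`. -/
def infLap (F : EuclideanSpace ℝ ι → ℝ) (x : EuclideanSpace ℝ ι) : ℝ :=
  ∑ i, ∑ j, pd F x i * pd F x j * fderiv ℝ (fun y => pd F y i) x (EuclideanSpace.single j 1)

/-- The squared norm `‖∇F‖²` of the gradient of `F` at `x`. -/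
def gradSq (F : EuclideanSpace ℝ ι → ℝ) (x : EuclideanSpace ℝ ι) : ℝ :=
  ∑ i, (pd F x i) ^ 2

/-- `Uⱼ(Xⱼ,Yⱼ) = ‖Xⱼ‖² − ‖Yⱼ‖²` for the `j`-th block of `ℝ^{2n₁} × ⋯ × ℝ^{2n_k}`. -/
def Ublock (k : ℕ) (n : Fin k → ℕ) (j : Fin k)
    (z : EuclideanSpace ℝ ((j : Fin k) × (Fin (n j) ⊕ Fin (n j)))) : ℝ :=
  ∑ i : Fin (n j), (z ⟨j, Sum.inl i⟩) ^ 2 - ∑ i : Fin (n j), (z ⟨j, Sum.inr i⟩) ^ 2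

/-- `Vⱼ(Xⱼ,Yⱼ) = 2⟨Xⱼ,Yⱼ⟩` for the `j`-th block. -/
def Vblock (k : ℕ) (n : Fin k → ℕ) (j : Fin k)
    (z : EuclideanSpace ℝ ((j : Fin k) × (Fin (n j) ⊕ Fin (n j)))) : ℝ :=
  2 * ∑ i : Fin (n j), z ⟨j, Sum.inl i⟩ * z ⟨j, Sum.inr i⟩

/-- The linear combination `F = Σⱼ cⱼ·Fⱼ` of the independent CH-functions
`Fⱼ = (1/2)·arctan(Vⱼ/Uⱼ)`. -/
def Fcomb (k : ℕ) (n : Fin k → ℕ) (c : Fin k → ℝ)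
    (z : EuclideanSpace ℝ ((j : Fin k) × (Fin (n j) ⊕ Fin (n j)))) : ℝ :=
  ∑ j : Fin k, c j * ((1 / 2) * Real.arctan (Vblock k n j z / Ublock k n j z))

lemma hasFDerivAt_quot {E : Type*} [NormedAddCommGroup E] [NormedSpace ℝ E]
    {f g : E → ℝ} {f' g' : E →L[ℝ] ℝ} {z : E} (hf : HasFDerivAt f f' z)
    (hg : HasFDerivAt g g' z) (h0 : g z ≠ 0) :
    HasFDerivAt (fun y => f y / g y) ((g z ^ 2)⁻¹ • (g z • f' - f z • g')) z := by
  have h := hf.fun_mul ((hasDerivAt_inv h0).comp_hasFDerivAt z hg)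
  refine h.congr_fderiv ?_
  ext v
  simp
  field_simp
  ring

lemma hasFDerivAt_sq {E : Type*} [NormedAddCommGroup E] [NormedSpace ℝ E]
    {f : E → ℝ} {f' : E →L[ℝ] ℝ} {z : E} (hf : HasFDerivAt f f' z) :
    HasFDerivAt (fun y => f y ^ 2) ((2 * f z) • f') z := by
  refine (hf.pow 2).congr_fderiv ?_
  ext v
  simp

/-- The index set of the coordinates of `ℝ^{2n₁} × ⋯ × ℝ^{2n_k}`. -/
abbrev Idx (k : ℕ) (n : Fin k → ℕ) : Type := (j : Fin k) × (Fin (n j) ⊕ Fin (n j))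

/-- The `p`-th coordinate as a continuous linear functional. -/
def coordL {κ : Type*} [Fintype κ] (p : κ) : EuclideanSpace ℝ κ →L[ℝ] ℝ :=
  EuclideanSpace.proj p

lemma coordL_apply {κ : Type*} [Fintype κ] (p : κ) (v : EuclideanSpace ℝ κ) :
    coordL p v = v p := rfl

/-- The differential of `Uⱼ` at `z`. -/
def dU (k : ℕ) (n : Fin k → ℕ) (j : Fin k) (z : EuclideanSpace ℝ (Idx k n)) :
    EuclideanSpace ℝ (Idx k n) →L[ℝ] ℝ :=
  ∑ i : Fin (n j), (2 * z ⟨j, Sum.inl i⟩) • coordL (⟨j, Sum.inl i⟩ : Idx k n) -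
    ∑ i : Fin (n j), (2 * z ⟨j, Sum.inr i⟩) • coordL (⟨j, Sum.inr i⟩ : Idx k n)

/-- The differential of `Vⱼ` at `z`. -/
def dV (k : ℕ) (n : Fin k → ℕ) (j : Fin k) (z : EuclideanSpace ℝ (Idx k n)) :
    EuclideanSpace ℝ (Idx k n) →L[ℝ] ℝ :=
  (2 : ℝ) • ∑ i : Fin (n j), (z ⟨j, Sum.inl i⟩ • coordL (⟨j, Sum.inr i⟩ : Idx k n) +
    z ⟨j, Sum.inr i⟩ • coordL (⟨j, Sum.inl i⟩ : Idx k n))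

lemma dU_apply (k : ℕ) (n : Fin k → ℕ) (j : Fin k) (z v : EuclideanSpace ℝ (Idx k n)) :
    dU k n j z v = ∑ i : Fin (n j), 2 * z ⟨j, Sum.inl i⟩ * v ⟨j, Sum.inl i⟩ -
      ∑ i : Fin (n j), 2 * z ⟨j, Sum.inr i⟩ * v ⟨j, Sum.inr i⟩ := by
  simp [dU, coordL_apply]

lemma dV_apply (k : ℕ) (n : Fin k → ℕ) (j : Fin k) (z v : EuclideanSpace ℝ (Idx k n)) :
    dV k n j z v = 2 * ∑ i : Fin (n j), (z ⟨j, Sum.inl i⟩ * v ⟨j, Sum.inr i⟩ +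
      z ⟨j, Sum.inr i⟩ * v ⟨j, Sum.inl i⟩) := by
  simp [dV, coordL_apply]

lemma hasFDerivAt_coord {κ : Type*} [Fintype κ] (p : κ) (z : EuclideanSpace ℝ κ) :
    HasFDerivAt (fun y : EuclideanSpace ℝ κ => y p)
      (coordL p) z :=
  (coordL p).hasFDerivAt

lemma hasFDerivAt_Ublock (k : ℕ) (n : Fin k → ℕ) (j : Fin k)
    (z : EuclideanSpace ℝ (Idx k n)) : HasFDerivAt (Ublock k n j) (dU k n j z) z := by
  unfold Ublock dU
  refine HasFDerivAt.fun_sub (HasFDerivAt.fun_sum fun i _ => ?_)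
    (HasFDerivAt.fun_sum fun i _ => ?_)
  all_goals
    exact hasFDerivAt_sq (hasFDerivAt_coord _ z)

lemma hasFDerivAt_Vblock (k : ℕ) (n : Fin k → ℕ) (j : Fin k)
    (z : EuclideanSpace ℝ (Idx k n)) : HasFDerivAt (Vblock k n j) (dV k n j z) z := by
  unfold Vblock dV
  refine HasFDerivAt.const_mul (HasFDerivAt.fun_sum fun i _ => ?_) 2
  exact (hasFDerivAt_coord _ z).fun_mul (hasFDerivAt_coord _ z)

/-- The partial derivatives of `Fcomb` where all `Uⱼ ≠ 0`, as explicit rational functions. -/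
def gradF (k : ℕ) (n : Fin k → ℕ) (c : Fin k → ℝ) (z : EuclideanSpace ℝ (Idx k n)) :
    Idx k n → ℝ
  | ⟨j, Sum.inl i⟩ => c j * (Ublock k n j z * z ⟨j, Sum.inr i⟩ - Vblock k n j z * z ⟨j, Sum.inl i⟩)
      / (Ublock k n j z ^ 2 + Vblock k n j z ^ 2)
  | ⟨j, Sum.inr i⟩ => c j * (Ublock k n j z * z ⟨j, Sum.inl i⟩ + Vblock k n j z * z ⟨j, Sum.inr i⟩)
      / (Ublock k n j z ^ 2 + Vblock k n j z ^ 2)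

lemma hasFDerivAt_Fcomb (k : ℕ) (n : Fin k → ℕ) (c : Fin k → ℝ)
    (z : EuclideanSpace ℝ (Idx k n)) (hz : ∀ j, Ublock k n j z ≠ 0) :
    HasFDerivAt (Fcomb k n c)
      (∑ p, gradF k n c z p • coordL p) z := by
  have hj := fun j => (((hasFDerivAt_quot
      (hasFDerivAt_Vblock k n j z) (hasFDerivAt_Ublock k n j z)
      (hz j)).arctan).const_mul (1 / 2)).const_mul (c j)
  have h := HasFDerivAt.fun_sum (u := Finset.univ) fun j _ => hj j
  refine HasFDerivAt.congr_fderiv (f := Fcomb k n c) h ?_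
  ext v
  simp only [sum_apply, smul_apply, smul_eq_mul,
    sub_apply, add_apply, coordL_apply, Fintype.sum_sigma,
    Fintype.sum_sum_type, gradF]
  refine Finset.sum_congr rfl fun j _ => ?_
  have hU := hz j
  have hW : Ublock k n j z ^ 2 + Vblock k n j z ^ 2 ≠ 0 := by positivity
  trans c j / (2 * (Ublock k n j z ^ 2 + Vblock k n j z ^ 2)) *
    (Ublock k n j z * dV k n j z v - Vblock k n j z * dU k n j z v)
  · field_simp
  · rw [dU_apply, dV_apply, ← Finset.sum_sub_distrib, Finset.mul_sum, Finset.mul_sum,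
      Finset.mul_sum, ← Finset.sum_sub_distrib, Finset.mul_sum, ← Finset.sum_add_distrib]
    refine Finset.sum_congr rfl fun i _ => ?_
    field_simp
    ring

lemma pd_Fcomb (k : ℕ) (n : Fin k → ℕ) (c : Fin k → ℝ)
    (z : EuclideanSpace ℝ (Idx k n)) (hz : ∀ j, Ublock k n j z ≠ 0) (p : Idx k n) :
    pd (Fcomb k n c) z p = gradF k n c z p := by
  rw [pd, (hasFDerivAt_Fcomb k n c z hz).fderiv]
  simp [coordL_apply]

lemma pd_Fcomb_eventually (k : ℕ) (n : Fin k → ℕ) (c : Fin k → ℝ)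
    (z : EuclideanSpace ℝ (Idx k n)) (hz : ∀ j, Ublock k n j z ≠ 0) (p : Idx k n) :
    (fun y => pd (Fcomb k n c) y p) =ᶠ[nhds z] fun y => gradF k n c y p := by
  have h : ∀ᶠ y in nhds z, ∀ j, Ublock k n j y ≠ 0 := Filter.eventually_all.2 fun j =>
    (hasFDerivAt_Ublock k n j z).continuousAt.eventually_ne (hz j)
  filter_upwards [h] with y hy using pd_Fcomb k n c y hy p

/-- Quotient rule for the common shape `c (U a + s V b) / (U² + V²)` of the components of
`gradF`, where `s = ±1`. -/
lemma fderiv_shape {E : Type*} [NormedAddCommGroup E] [NormedSpace ℝ E]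
    {U V a b : E → ℝ} {U' V' a' b' : E →L[ℝ] ℝ} {z : E} (c s : ℝ)
    (hU : HasFDerivAt U U' z) (hV : HasFDerivAt V V' z)
    (ha : HasFDerivAt a a' z) (hb : HasFDerivAt b b' z) (h0 : U z ≠ 0) (v : E) :
    fderiv ℝ (fun y => c * (U y * a y + s * (V y * b y)) / (U y ^ 2 + V y ^ 2)) z v =
      c * ((U z * a' v + U' v * a z + s * (V z * b' v + V' v * b z)) * (U z ^ 2 + V z ^ 2) -
        (U z * a z + s * (V z * b z)) * (2 * U z * U' v + 2 * V z * V' v)) /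
        (U z ^ 2 + V z ^ 2) ^ 2 := by
  have hW : U z ^ 2 + V z ^ 2 ≠ 0 := by positivity
  have h := hasFDerivAt_quot (((hU.fun_mul ha).fun_add ((hV.fun_mul hb).const_mul s)).const_mul c)
    ((hasFDerivAt_sq hU).fun_add (hasFDerivAt_sq hV)) hW
  rw [h.fderiv]
  simp
  field_simp

lemma fderiv_pd_inl (k : ℕ) (n : Fin k → ℕ) (c : Fin k → ℝ)
    (z : EuclideanSpace ℝ (Idx k n)) (hz : ∀ j, Ublock k n j z ≠ 0) (j : Fin k) (i : Fin (n j))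
    (v : EuclideanSpace ℝ (Idx k n)) :
    fderiv ℝ (fun y => pd (Fcomb k n c) y ⟨j, Sum.inl i⟩) z v =
      c j * ((Ublock k n j z * v ⟨j, Sum.inr i⟩ + dU k n j z v * z ⟨j, Sum.inr i⟩ -
          (Vblock k n j z * v ⟨j, Sum.inl i⟩ + dV k n j z v * z ⟨j, Sum.inl i⟩)) *
          (Ublock k n j z ^ 2 + Vblock k n j z ^ 2) -
        (Ublock k n j z * z ⟨j, Sum.inr i⟩ - Vblock k n j z * z ⟨j, Sum.inl i⟩) *
          (2 * Ublock k n j z * dU k n j z v + 2 * Vblock k n j z * dV k n j z v)) /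
        (Ublock k n j z ^ 2 + Vblock k n j z ^ 2) ^ 2 := by
  rw [(pd_Fcomb_eventually k n c z hz _).fderiv_eq]
  have h := fderiv_shape (c j) (-1) (hasFDerivAt_Ublock k n j z) (hasFDerivAt_Vblock k n j z)
    (hasFDerivAt_coord ⟨j, Sum.inr i⟩ z) (hasFDerivAt_coord ⟨j, Sum.inl i⟩ z) (hz j) v
  simpa only [gradF, neg_one_mul, ← sub_eq_add_neg, coordL_apply] using h

lemma fderiv_pd_inr (k : ℕ) (n : Fin k → ℕ) (c : Fin k → ℝ)
    (z : EuclideanSpace ℝ (Idx k n)) (hz : ∀ j, Ublock k n j z ≠ 0) (j : Fin k) (i : Fin (n j))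
    (v : EuclideanSpace ℝ (Idx k n)) :
    fderiv ℝ (fun y => pd (Fcomb k n c) y ⟨j, Sum.inr i⟩) z v =
      c j * ((Ublock k n j z * v ⟨j, Sum.inl i⟩ + dU k n j z v * z ⟨j, Sum.inl i⟩ +
          (Vblock k n j z * v ⟨j, Sum.inr i⟩ + dV k n j z v * z ⟨j, Sum.inr i⟩)) *
          (Ublock k n j z ^ 2 + Vblock k n j z ^ 2) -
        (Ublock k n j z * z ⟨j, Sum.inl i⟩ + Vblock k n j z * z ⟨j, Sum.inr i⟩) *
          (2 * Ublock k n j z * dU k n j z v + 2 * Vblock k n j z * dV k n j z v)) /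
        (Ublock k n j z ^ 2 + Vblock k n j z ^ 2) ^ 2 := by
  rw [(pd_Fcomb_eventually k n c z hz _).fderiv_eq]
  have h := fderiv_shape (c j) 1 (hasFDerivAt_Ublock k n j z) (hasFDerivAt_Vblock k n j z)
    (hasFDerivAt_coord ⟨j, Sum.inl i⟩ z) (hasFDerivAt_coord ⟨j, Sum.inr i⟩ z) (hz j) v
  simpa only [gradF, one_mul, coordL_apply] using h

lemma lap_Fcomb (k : ℕ) (n : Fin k → ℕ) (c : Fin k → ℝ)
    (z : EuclideanSpace ℝ (Idx k n)) (hz : ∀ j, Ublock k n j z ≠ 0) :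
    lap (Fcomb k n c) z = 0 := by
  unfold lap
  rw [Fintype.sum_sigma]
  refine Finset.sum_eq_zero fun j _ => ?_
  rw [Fintype.sum_sum_type, ← Finset.sum_add_distrib]
  refine Finset.sum_eq_zero fun i _ => ?_
  rw [fderiv_pd_inl k n c z hz, fderiv_pd_inr k n c z hz]
  simp only [dU_apply, dV_apply]
  simp
  ring

/-- Along the gradient `v = ∇F`, the functions `Uⱼ² + Vⱼ²` and `‖Xⱼ‖² + ‖Yⱼ‖²` are constant to
first order. -/
lemma grad_orthogonality (k : ℕ) (n : Fin k → ℕ) (c : Fin k → ℝ)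
    (z v : EuclideanSpace ℝ (Idx k n)) (hv : ∀ p, v p = gradF k n c z p) (j : Fin k) :
    Ublock k n j z * dU k n j z v + Vblock k n j z * dV k n j z v = 0 ∧
    ∑ i, (z ⟨j, Sum.inl i⟩ * v ⟨j, Sum.inl i⟩ + z ⟨j, Sum.inr i⟩ * v ⟨j, Sum.inr i⟩) = 0 := by
  constructor
  · rw [dU_apply, dV_apply, ← Finset.sum_sub_distrib, Finset.mul_sum, Finset.mul_sum,
      Finset.mul_sum, ← Finset.sum_add_distrib]
    refine Finset.sum_eq_zero fun i _ => ?_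
    simp only [hv, gradF]
    ring
  · set q := c j / (Ublock k n j z ^ 2 + Vblock k n j z ^ 2) with hq
    -- the sum is `q (U · 2⟨X, Y⟩ - V (‖X‖² - ‖Y‖²)) = q (U V - V U)`
    have h : ∀ i, z ⟨j, Sum.inl i⟩ * v ⟨j, Sum.inl i⟩ + z ⟨j, Sum.inr i⟩ * v ⟨j, Sum.inr i⟩ =
        q * Ublock k n j z * 2 * (z ⟨j, Sum.inl i⟩ * z ⟨j, Sum.inr i⟩) -
        q * Vblock k n j z * (z ⟨j, Sum.inl i⟩ ^ 2 - z ⟨j, Sum.inr i⟩ ^ 2) := fun i => by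
      simp only [hv, gradF, hq]
      ring
    simp only [h]
    rw [Finset.sum_sub_distrib, ← Finset.mul_sum, ← Finset.mul_sum, Finset.sum_sub_distrib]
    have hU : Ublock k n j z = ∑ i : Fin (n j), (z ⟨j, Sum.inl i⟩) ^ 2 -
      ∑ i : Fin (n j), (z ⟨j, Sum.inr i⟩) ^ 2 := rfl
    have hV : Vblock k n j z = 2 * ∑ i : Fin (n j), z ⟨j, Sum.inl i⟩ * z ⟨j, Sum.inr i⟩ := rfl
    rw [← hU, mul_assoc _ 2, ← hV]
    ring

lemma infLap_Fcomb (k : ℕ) (n : Fin k → ℕ) (c : Fin k → ℝ)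
    (z : EuclideanSpace ℝ (Idx k n)) (hz : ∀ j, Ublock k n j z ≠ 0) :
    infLap (Fcomb k n c) z = 0 := by
  obtain ⟨v, hv⟩ : ∃ v : EuclideanSpace ℝ (Idx k n), ∀ p, v p = gradF k n c z p :=
    ⟨WithLp.toLp 2 (gradF k n c z), fun _ => rfl⟩
  have hsum : v = ∑ q, v q • EuclideanSpace.single q (1 : ℝ) := by
    ext p
    simp [Pi.single_apply]
  -- the inner sum is the derivative of `∂ₚF` in the direction `v = ∇F`
  have hdir : infLap (Fcomb k n c) z =
      ∑ p, v p * fderiv ℝ (fun y => pd (Fcomb k n c) y p) z v := by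
    unfold infLap
    refine Finset.sum_congr rfl fun p _ => ?_
    conv_rhs => rw [hsum, map_sum, Finset.mul_sum]
    refine Finset.sum_congr rfl fun q _ => ?_
    rw [← hsum, pd_Fcomb k n c z hz, pd_Fcomb k n c z hz, ← hv, ← hv, map_smul, smul_eq_mul,
      mul_assoc]
  rw [hdir, Fintype.sum_sigma]
  refine Finset.sum_eq_zero fun j _ => ?_
  rw [Fintype.sum_sum_type, ← Finset.sum_add_distrib]
  obtain ⟨hW', hR⟩ := grad_orthogonality k n c z v hv j
  have hU := hz j
  have hW : Ublock k n j z ^ 2 + Vblock k n j z ^ 2 ≠ 0 := by positivity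
  have hterm : ∀ i, v ⟨j, Sum.inl i⟩ *
        fderiv ℝ (fun y => pd (Fcomb k n c) y ⟨j, Sum.inl i⟩) z v +
      v ⟨j, Sum.inr i⟩ * fderiv ℝ (fun y => pd (Fcomb k n c) y ⟨j, Sum.inr i⟩) z v =
      c j ^ 2 / (Ublock k n j z ^ 2 + Vblock k n j z ^ 2) *
        (z ⟨j, Sum.inl i⟩ * v ⟨j, Sum.inl i⟩ + z ⟨j, Sum.inr i⟩ * v ⟨j, Sum.inr i⟩) := by
    intro i
    rw [fderiv_pd_inl k n c z hz, fderiv_pd_inr k n c z hz]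
    generalize dU k n j z v = U' at *
    generalize dV k n j z v = V' at *
    have e1 := hv ⟨j, Sum.inl i⟩
    have e2 := hv ⟨j, Sum.inr i⟩
    simp only [gradF] at e1 e2
    generalize Ublock k n j z = U at *
    generalize Vblock k n j z = V at *
    generalize z ⟨j, Sum.inl i⟩ = x at *
    generalize z ⟨j, Sum.inr i⟩ = y at *
    generalize v ⟨j, Sum.inl i⟩ = a at *
    generalize v ⟨j, Sum.inr i⟩ = b at *
    have hW2 : 2 * U * U' + 2 * V * V' = 0 := by linear_combination 2 * hW'
    rw [hW2]
    -- only the two factors outside the derivatives are expanded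
    trans (c j * (U * y - V * x) / (U ^ 2 + V ^ 2)) * (c j *
        (U * b + U' * y - (V * a + V' * x)) / (U ^ 2 + V ^ 2)) +
      (c j * (U * x + V * y) / (U ^ 2 + V ^ 2)) * (c j *
        (U * a + U' * x + (V * b + V' * y)) / (U ^ 2 + V ^ 2))
    · rw [← e1, ← e2]
      field_simp
      ring
    · field_simp
      linear_combination c j ^ 2 * (x ^ 2 + y ^ 2) * hW'
  simp only [hterm]
  rw [← Finset.mul_sum, hR, mul_zero]

/-- a linear combination of independent CH-functions is harmonic,
infinity-harmonic, and satisfies the minimal hypersurface equation on the open set where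
each `Uⱼ ≠ 0`; hence its (multi-valued) graph is minimal in `ℝ^{2(n₁+⋯+n_k)+1}`. -/
theorem generalized_helicoids (k : ℕ) (hk : 1 ≤ k) (n : Fin k → ℕ) (hn : ∀ j, 1 ≤ n j)
    (c : Fin k → ℝ) (z : EuclideanSpace ℝ ((j : Fin k) × (Fin (n j) ⊕ Fin (n j))))
    (hz : ∀ j, Ublock k n j z ≠ 0) :
    lap (Fcomb k n c) z = 0 ∧ infLap (Fcomb k n c) z = 0 ∧
    (1 + gradSq (Fcomb k n c) z) * lap (Fcomb k n c) z - infLap (Fcomb k n c) z = 0 := by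
  have h1 := lap_Fcomb k n c z hz
  have h2 := infLap_Fcomb k n c z hz
  exact ⟨h1, h2, by rw [h1, h2]; ring⟩
end
end

section
/- Minimal quintic cone in ℝ^{2n+2}: let n ≥ 1, and on ℝ^{2n+2} set T₁ = Σⱼ(xⱼ² − yⱼ²) and T₂ = Σⱼ 2xⱼyⱼ (sums over j = 1,…,n). The quintic polynomial P = y_{n+1}·(T₁² − T₂²) − x_{n+1}·(2T₁T₂) satisfies ‖∇P‖²·ΔP − Δ_∞P = 0 at every point of {P = 0} where ∇P ≠ 0; hence {y_{n+1}(T₁² − T₂²) − x_{n+1}(2T₁T₂) = 0} is a minimal quintic cone in ℝ^{2n+2}. -/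
/-!
Writing `u = x_{n+1} + i y_{n+1}`, `w_j = x_j + i y_j` and `T = T₁ + i T₂ = Σ w_j²`, the quintic is
`P = Im (u · conj T²)`. It is affine in `u` and, for fixed `u`, is the imaginary part of an
antiholomorphic function of `w`, so `ΔP = 0`.

For `Δ_∞`, write `p = ∂P/∂T₁`, `q = ∂P/∂T₂`, `R = Σ |w_j|²` and `N = |T|²`. The gradients of `T₁`
and `T₂` are orthogonal of squared length `4R`, hence `‖∇P‖² = N² + 16 R |u|² N`, and each of `N`,
`|u|²`, `R` has derivative along `∇P` divisible by `P`, because `P` is homogeneous in `T`, `u`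
and `w` separately. Since `Δ_∞P = ½ ⟨∇P, ∇‖∇P‖²⟩`, `Δ_∞P` is a multiple of `P`
(`infLap_quinticP`), and it vanishes on `{P = 0}`.
-/

noncomputable section

variable {ι : Type*} [Fintype ι] [DecidableEq ι]

/-- `T₁ = Σ_{j=1}^{n} (xⱼ² − yⱼ²)` on `ℝ^{2n+2}`, with `xⱼ = z (inl j)`, `yⱼ = z (inr j)`. -/
def T1 (n : ℕ) (z : EuclideanSpace ℝ (Fin (n + 1) ⊕ Fin (n + 1))) : ℝ :=
  ∑ j : Fin n, ((z (Sum.inl j.castSucc)) ^ 2 - (z (Sum.inr j.castSucc)) ^ 2)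

/-- `T₂ = Σ_{j=1}^{n} 2xⱼyⱼ` on `ℝ^{2n+2}`. -/
def T2 (n : ℕ) (z : EuclideanSpace ℝ (Fin (n + 1) ⊕ Fin (n + 1))) : ℝ :=
  ∑ j : Fin n, 2 * z (Sum.inl j.castSucc) * z (Sum.inr j.castSucc)

/-- The quintic `P = y_{n+1}·(T₁² − T₂²) − x_{n+1}·(2T₁T₂)`. -/
def QuinticP (n : ℕ) (z : EuclideanSpace ℝ (Fin (n + 1) ⊕ Fin (n + 1))) : ℝ :=
  z (Sum.inr (Fin.last n)) * ((T1 n z) ^ 2 - (T2 n z) ^ 2) -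
    z (Sum.inl (Fin.last n)) * (2 * T1 n z * T2 n z)

/-! ### Differentials of `T₁` and `T₂` -/

/-- The space `ℝ^{2n+2}` on which the quintic lives. -/
abbrev Sp (n : ℕ) : Type := EuclideanSpace ℝ (Fin (n + 1) ⊕ Fin (n + 1))

/-- The differential of `T1`. -/
def dT1 (n : ℕ) (z : Sp n) : Sp n →L[ℝ] ℝ :=
  ∑ j : Fin n, ((2 * z (Sum.inl j.castSucc)) • EuclideanSpace.proj (𝕜 := ℝ) (Sum.inl j.castSucc)
    - (2 * z (Sum.inr j.castSucc)) • EuclideanSpace.proj (𝕜 := ℝ) (Sum.inr j.castSucc))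

/-- The differential of `T2`. -/
def dT2 (n : ℕ) (z : Sp n) : Sp n →L[ℝ] ℝ :=
  ∑ j : Fin n, ((2 * z (Sum.inr j.castSucc)) • EuclideanSpace.proj (𝕜 := ℝ) (Sum.inl j.castSucc)
    + (2 * z (Sum.inl j.castSucc)) • EuclideanSpace.proj (𝕜 := ℝ) (Sum.inr j.castSucc))

lemma dT1_apply (n : ℕ) (z v : Sp n) : dT1 n z v = ∑ j : Fin n,
    (2 * z (Sum.inl j.castSucc) * v (Sum.inl j.castSucc)
      - 2 * z (Sum.inr j.castSucc) * v (Sum.inr j.castSucc)) := by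
  simp [dT1]

lemma dT2_apply (n : ℕ) (z v : Sp n) : dT2 n z v = ∑ j : Fin n,
    (2 * z (Sum.inr j.castSucc) * v (Sum.inl j.castSucc)
      + 2 * z (Sum.inl j.castSucc) * v (Sum.inr j.castSucc)) := by
  simp [dT2]

lemma hasFDerivAt_coord_s17 (n : ℕ) (i : Fin (n + 1) ⊕ Fin (n + 1)) (z : Sp n) :
    HasFDerivAt (fun y : Sp n => y i) (EuclideanSpace.proj (𝕜 := ℝ) i : Sp n →L[ℝ] ℝ) z :=
  (EuclideanSpace.proj (𝕜 := ℝ) i : Sp n →L[ℝ] ℝ).hasFDerivAt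

lemma hasFDerivAt_T1 (n : ℕ) (z : Sp n) : HasFDerivAt (T1 n) (dT1 n z) z := by
  unfold dT1
  refine HasFDerivAt.fun_sum fun j _ => ?_
  have h := ((hasFDerivAt_coord_s17 n (Sum.inl j.castSucc) z).pow 2).sub
    ((hasFDerivAt_coord_s17 n (Sum.inr j.castSucc) z).pow 2)
  refine h.congr_fderiv ?_
  ext v
  simp

lemma hasFDerivAt_T2 (n : ℕ) (z : Sp n) : HasFDerivAt (T2 n) (dT2 n z) z := by
  unfold dT2
  refine HasFDerivAt.fun_sum fun j _ => ?_
  have h := ((hasFDerivAt_coord_s17 n (Sum.inl j.castSucc) z).const_mul 2).mul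
    (hasFDerivAt_coord_s17 n (Sum.inr j.castSucc) z)
  refine h.congr_fderiv ?_
  ext v
  simp
  ring

/-! ### First derivatives of `P` -/

/-- The partial derivative `∂P/∂T₁` of `P` as a polynomial in `u, T₁, T₂`. -/
def pA (n : ℕ) (z : Sp n) : ℝ :=
  2 * (z (Sum.inr (Fin.last n)) * T1 n z - z (Sum.inl (Fin.last n)) * T2 n z)

/-- The partial derivative `∂P/∂T₂` of `P` as a polynomial in `u, T₁, T₂`. -/
def pB (n : ℕ) (z : Sp n) : ℝ :=
  -2 * (z (Sum.inr (Fin.last n)) * T2 n z + z (Sum.inl (Fin.last n)) * T1 n z)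

/-- The differential of `pA`. -/
def dpA (n : ℕ) (z v : Sp n) : ℝ :=
  2 * (v (Sum.inr (Fin.last n)) * T1 n z + z (Sum.inr (Fin.last n)) * dT1 n z v
    - v (Sum.inl (Fin.last n)) * T2 n z - z (Sum.inl (Fin.last n)) * dT2 n z v)

/-- The differential of `pB`. -/
def dpB (n : ℕ) (z v : Sp n) : ℝ :=
  -2 * (v (Sum.inr (Fin.last n)) * T2 n z + z (Sum.inr (Fin.last n)) * dT2 n z v
    + v (Sum.inl (Fin.last n)) * T1 n z + z (Sum.inl (Fin.last n)) * dT1 n z v)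

lemma hasFDerivAt_pA (n : ℕ) (z : Sp n) :
    ∃ L : Sp n →L[ℝ] ℝ, HasFDerivAt (pA n) L z ∧ ∀ v, L v = dpA n z v := by
  refine ⟨_, (((hasFDerivAt_coord_s17 n (Sum.inr (Fin.last n)) z).mul (hasFDerivAt_T1 n z)).sub
    ((hasFDerivAt_coord_s17 n (Sum.inl (Fin.last n)) z).mul (hasFDerivAt_T2 n z))).const_mul 2, ?_⟩
  intro v
  simp [dpA]
  ring

lemma hasFDerivAt_pB (n : ℕ) (z : Sp n) :
    ∃ L : Sp n →L[ℝ] ℝ, HasFDerivAt (pB n) L z ∧ ∀ v, L v = dpB n z v := by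
  refine ⟨_, (((hasFDerivAt_coord_s17 n (Sum.inr (Fin.last n)) z).mul (hasFDerivAt_T2 n z)).add
    ((hasFDerivAt_coord_s17 n (Sum.inl (Fin.last n)) z).mul (hasFDerivAt_T1 n z))).const_mul (-2), ?_⟩
  intro v
  simp [dpB]
  ring

lemma fderiv_quinticP (n : ℕ) (z v : Sp n) : fderiv ℝ (QuinticP n) z v =
    v (Sum.inr (Fin.last n)) * (T1 n z ^ 2 - T2 n z ^ 2)
      - v (Sum.inl (Fin.last n)) * (2 * T1 n z * T2 n z)
      + pA n z * dT1 n z v + pB n z * dT2 n z v := by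
  have h := ((hasFDerivAt_coord_s17 n (Sum.inr (Fin.last n)) z).mul
    (((hasFDerivAt_T1 n z).pow 2).sub ((hasFDerivAt_T2 n z).pow 2))).sub
    ((hasFDerivAt_coord_s17 n (Sum.inl (Fin.last n)) z).mul
      (((hasFDerivAt_T1 n z).const_mul 2).mul (hasFDerivAt_T2 n z)))
  have h' : HasFDerivAt (QuinticP n) _ z := h
  rw [h'.fderiv]
  simp [pA, pB]
  ring

lemma dT1_single_inl (n : ℕ) (z : Sp n) (j : Fin n) :
    dT1 n z (EuclideanSpace.single (Sum.inl j.castSucc) 1) = 2 * z (Sum.inl j.castSucc) := by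
  simp [dT1_apply]

lemma dT1_single_inr (n : ℕ) (z : Sp n) (j : Fin n) :
    dT1 n z (EuclideanSpace.single (Sum.inr j.castSucc) 1) = -2 * z (Sum.inr j.castSucc) := by
  simp [dT1_apply]

lemma dT2_single_inl (n : ℕ) (z : Sp n) (j : Fin n) :
    dT2 n z (EuclideanSpace.single (Sum.inl j.castSucc) 1) = 2 * z (Sum.inr j.castSucc) := by
  simp [dT2_apply]

lemma dT2_single_inr (n : ℕ) (z : Sp n) (j : Fin n) :
    dT2 n z (EuclideanSpace.single (Sum.inr j.castSucc) 1) = 2 * z (Sum.inl j.castSucc) := by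
  simp [dT2_apply]

lemma dT_single_last (n : ℕ) (z : Sp n) :
    dT1 n z (EuclideanSpace.single (Sum.inl (Fin.last n)) 1) = 0 ∧
    dT1 n z (EuclideanSpace.single (Sum.inr (Fin.last n)) 1) = 0 ∧
    dT2 n z (EuclideanSpace.single (Sum.inl (Fin.last n)) 1) = 0 ∧
    dT2 n z (EuclideanSpace.single (Sum.inr (Fin.last n)) 1) = 0 := by
  refine ⟨?_, ?_, ?_, ?_⟩ <;> simp [dT1_apply, dT2_apply]

lemma pd_inl_last (n : ℕ) (z : Sp n) :
    pd (QuinticP n) z (Sum.inl (Fin.last n)) = -2 * (T1 n z * T2 n z) := by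
  obtain ⟨h1, h2, h3, h4⟩ := dT_single_last n z
  rw [pd, fderiv_quinticP, h1, h3]
  simp
  ring

lemma pd_inr_last (n : ℕ) (z : Sp n) :
    pd (QuinticP n) z (Sum.inr (Fin.last n)) = T1 n z ^ 2 - T2 n z ^ 2 := by
  obtain ⟨h1, h2, h3, h4⟩ := dT_single_last n z
  rw [pd, fderiv_quinticP, h2, h4]
  simp

lemma pd_inl_castSucc (n : ℕ) (z : Sp n) (j : Fin n) :
    pd (QuinticP n) z (Sum.inl j.castSucc) =
      2 * (pA n z * z (Sum.inl j.castSucc) + pB n z * z (Sum.inr j.castSucc)) := by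
  rw [pd, fderiv_quinticP, dT1_single_inl, dT2_single_inl]
  simp
  ring

lemma pd_inr_castSucc (n : ℕ) (z : Sp n) (j : Fin n) :
    pd (QuinticP n) z (Sum.inr j.castSucc) =
      2 * (pB n z * z (Sum.inl j.castSucc) - pA n z * z (Sum.inr j.castSucc)) := by
  rw [pd, fderiv_quinticP, dT1_single_inr, dT2_single_inr]
  simp
  ring

/-! ### Second derivatives and the Laplacian of `P` -/

lemma fderiv_pd_inl_last (n : ℕ) (z v : Sp n) :
    fderiv ℝ (fun y => pd (QuinticP n) y (Sum.inl (Fin.last n))) z v =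
      -2 * (dT1 n z v * T2 n z + T1 n z * dT2 n z v) := by
  simp_rw [pd_inl_last]
  rw [(((hasFDerivAt_T1 n z).fun_mul (hasFDerivAt_T2 n z)).const_mul (-2)).fderiv]
  simp
  ring

lemma fderiv_pd_inr_last (n : ℕ) (z v : Sp n) :
    fderiv ℝ (fun y => pd (QuinticP n) y (Sum.inr (Fin.last n))) z v =
      2 * (T1 n z * dT1 n z v - T2 n z * dT2 n z v) := by
  simp_rw [pd_inr_last]
  have h : HasFDerivAt (fun y => T1 n y ^ 2 - T2 n y ^ 2) _ z :=
    ((hasFDerivAt_T1 n z).pow 2).sub ((hasFDerivAt_T2 n z).pow 2)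
  rw [h.fderiv]
  simp
  ring

lemma fderiv_pd_inl_castSucc (n : ℕ) (z v : Sp n) (j : Fin n) :
    fderiv ℝ (fun y => pd (QuinticP n) y (Sum.inl j.castSucc)) z v =
      2 * (dpA n z v * z (Sum.inl j.castSucc) + pA n z * v (Sum.inl j.castSucc)
        + dpB n z v * z (Sum.inr j.castSucc) + pB n z * v (Sum.inr j.castSucc)) := by
  simp_rw [pd_inl_castSucc]
  obtain ⟨LA, hA, eA⟩ := hasFDerivAt_pA n z
  obtain ⟨LB, hB, eB⟩ := hasFDerivAt_pB n z
  rw [(((hA.fun_mul (hasFDerivAt_coord_s17 n (Sum.inl j.castSucc) z)).fun_add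
    (hB.fun_mul (hasFDerivAt_coord_s17 n (Sum.inr j.castSucc) z))).const_mul 2).fderiv]
  simp [eA, eB]
  ring

lemma fderiv_pd_inr_castSucc (n : ℕ) (z v : Sp n) (j : Fin n) :
    fderiv ℝ (fun y => pd (QuinticP n) y (Sum.inr j.castSucc)) z v =
      2 * (dpB n z v * z (Sum.inl j.castSucc) + pB n z * v (Sum.inl j.castSucc)
        - dpA n z v * z (Sum.inr j.castSucc) - pA n z * v (Sum.inr j.castSucc)) := by
  simp_rw [pd_inr_castSucc]
  obtain ⟨LA, hA, eA⟩ := hasFDerivAt_pA n z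
  obtain ⟨LB, hB, eB⟩ := hasFDerivAt_pB n z
  rw [(((hB.fun_mul (hasFDerivAt_coord_s17 n (Sum.inl j.castSucc) z)).fun_sub
    (hA.fun_mul (hasFDerivAt_coord_s17 n (Sum.inr j.castSucc) z))).const_mul 2).fderiv]
  simp [eA, eB]
  ring

lemma lap_quinticP (n : ℕ) (z : Sp n) : lap (QuinticP n) z = 0 := by
  obtain ⟨h1, h2, h3, h4⟩ := dT_single_last n z
  rw [lap, Fintype.sum_sum_type, Fin.sum_univ_castSucc, Fin.sum_univ_castSucc,
    fderiv_pd_inl_last, fderiv_pd_inr_last, h1, h2, h3, h4]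
  simp_rw [fderiv_pd_inl_castSucc, fderiv_pd_inr_castSucc, dpA, dpB, dT1_single_inl,
    dT1_single_inr, dT2_single_inl, dT2_single_inr]
  simp only [mul_zero, zero_mul, add_zero, sub_zero]
  -- the contributions of `x_j` and `y_j` cancel for each `j`
  rw [← Finset.sum_add_distrib]
  refine Finset.sum_eq_zero fun j _ => ?_
  simp
  ring

/-! ### The infinity-Laplacian of `P` -/

/-- The gradient of the quintic as a vector. -/
def gradP (n : ℕ) (z : Sp n) : Sp n := WithLp.toLp 2 (pd (QuinticP n) z)

lemma gradP_apply (n : ℕ) (z : Sp n) (i : Fin (n + 1) ⊕ Fin (n + 1)) :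
    gradP n z i = pd (QuinticP n) z i := rfl

/-- `Δ_∞P` as the sum of `∂ᵢP` times the derivative of `∂ᵢP` along `∇P`. -/
lemma infLap_eq (n : ℕ) (z : Sp n) : infLap (QuinticP n) z =
    ∑ i, pd (QuinticP n) z i * fderiv ℝ (fun y => pd (QuinticP n) y i) z (gradP n z) := by
  have hv : gradP n z = ∑ j, pd (QuinticP n) z j • EuclideanSpace.single j (1 : ℝ) := by
    ext i
    cases i <;> simp [gradP, Pi.single_apply]
  rw [infLap]
  refine Finset.sum_congr rfl fun i _ => ?_
  rw [hv, map_sum, Finset.mul_sum]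
  refine Finset.sum_congr rfl fun j _ => ?_
  rw [map_smul, smul_eq_mul, mul_assoc]

/-- The squared length `R = Σ_{j ≤ n} (xⱼ² + yⱼ²)`. -/
def R2 (n : ℕ) (z : Sp n) : ℝ :=
  ∑ j : Fin n, ((z (Sum.inl j.castSucc)) ^ 2 + (z (Sum.inr j.castSucc)) ^ 2)

lemma dT1_gradP (n : ℕ) (z : Sp n) : dT1 n z (gradP n z) = 4 * pA n z * R2 n z := by
  rw [dT1_apply, R2, Finset.mul_sum]
  refine Finset.sum_congr rfl fun j _ => ?_
  rw [gradP_apply, gradP_apply, pd_inl_castSucc, pd_inr_castSucc]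
  ring

lemma dT2_gradP (n : ℕ) (z : Sp n) : dT2 n z (gradP n z) = 4 * pB n z * R2 n z := by
  rw [dT2_apply, R2, Finset.mul_sum]
  refine Finset.sum_congr rfl fun j _ => ?_
  rw [gradP_apply, gradP_apply, pd_inl_castSucc, pd_inr_castSucc]
  ring

/-- The part of `Δ_∞P` coming from the coordinates `xⱼ, yⱼ` with `j ≤ n`. -/
lemma infLap_castSucc_part (n : ℕ) (z : Sp n) :
    ∑ j : Fin n, (pd (QuinticP n) z (Sum.inl j.castSucc) *
        fderiv ℝ (fun y => pd (QuinticP n) y (Sum.inl j.castSucc)) z (gradP n z)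
      + pd (QuinticP n) z (Sum.inr j.castSucc) *
        fderiv ℝ (fun y => pd (QuinticP n) y (Sum.inr j.castSucc)) z (gradP n z)) =
    (4 * (pA n z * dpA n z (gradP n z) + pB n z * dpB n z (gradP n z))) * R2 n z
      + (8 * pA n z * (pA n z ^ 2 + pB n z ^ 2)) * T1 n z
      + (8 * pB n z * (pA n z ^ 2 + pB n z ^ 2)) * T2 n z := by
  rw [R2, T1, T2, Finset.mul_sum, Finset.mul_sum, Finset.mul_sum, ← Finset.sum_add_distrib,
    ← Finset.sum_add_distrib]
  refine Finset.sum_congr rfl fun j _ => ?_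
  rw [fderiv_pd_inl_castSucc, fderiv_pd_inr_castSucc, gradP_apply, gradP_apply,
    pd_inl_castSucc, pd_inr_castSucc]
  ring

/-- `Δ_∞P` is a multiple of `P`. -/
lemma infLap_quinticP (n : ℕ) (z : Sp n) : infLap (QuinticP n) z =
    (32 * R2 n z * (T1 n z ^ 2 + T2 n z ^ 2)
      + 64 * ((z (Sum.inl (Fin.last n))) ^ 2 + (z (Sum.inr (Fin.last n))) ^ 2)
        * (T1 n z ^ 2 + T2 n z ^ 2)
      + 128 * R2 n z ^ 2
        * ((z (Sum.inl (Fin.last n))) ^ 2 + (z (Sum.inr (Fin.last n))) ^ 2))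
      * QuinticP n z := by
  have h := infLap_castSucc_part n z
  rw [Finset.sum_add_distrib] at h
  rw [infLap_eq, Fintype.sum_sum_type, Fin.sum_univ_castSucc, Fin.sum_univ_castSucc,
    add_add_add_comm, h, fderiv_pd_inl_last, fderiv_pd_inr_last, dpA, dpB, dT1_gradP, dT2_gradP,
    gradP_apply, gradP_apply, pd_inl_last, pd_inr_last, QuinticP, pA, pB]
  ring

/-- the quintic `P = y_{n+1}·(T₁² − T₂²) − x_{n+1}·(2T₁T₂)` satisfies
`‖∇P‖²·ΔP − Δ_∞P = 0` at every point of `{P = 0}` with `∇P ≠ 0`; hence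
`{y_{n+1}(T₁² − T₂²) = x_{n+1}(2T₁T₂)}` is a minimal quintic cone in `ℝ^{2n+2}`. -/
theorem quintic_cone_minimal (n : ℕ) (hn : 1 ≤ n)
    (z : EuclideanSpace ℝ (Fin (n + 1) ⊕ Fin (n + 1)))
    (hz : QuinticP n z = 0) (hgrad : ∃ i, pd (QuinticP n) z i ≠ 0) :
    gradSq (QuinticP n) z * lap (QuinticP n) z - infLap (QuinticP n) z = 0 := by
  rw [lap_quinticP, infLap_quinticP, hz]
  ring
end
end
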